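/- Let φ(X) = X² − 2X ∈ ℚ[X]. Then for every n ≥ 1, the splitting field K_n of the n-fold iterate φ^{∘n} over ℚ satisfies [K_n : ℚ] = 2^(n−1). -/

import Mathlib

open Polynomial

/-- The `n`-fold iterate (composition) of a polynomial, with `iterComp p 0 = X`. -/
noncomputable def iterComp (p : ℚ[X]) : ℕ → ℚ[X]
  | 0 => X
  | n + 1 => p.comp (iterComp p n)

/-- The splitting field of a rational polynomial inside a fixed algebraic closure of `ℚ`:
the intermediate field generated by its set of roots. -/
noncomputable def splitFld (p : ℚ[X]) : IntermediateField ℚ (AlgebraicClosure ℚ) :=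
  IntermediateField.adjoin ℚ (p.rootSet (AlgebraicClosure ℚ))

/-!
The substitution `x = z + z⁻¹ + 1` turns `φ(X) = X² - 2X` into squaring: `φ(x) = z² + z⁻² + 1`.
Hence `x` is a root of `φ^{∘n}` iff `w = z^(2^n)` satisfies `w + w⁻¹ + 1 = 0`, that is, iff `w` is a
primitive cube root of unity. All such `z` are powers of a primitive `3 * 2^n`-th root of unity `ζ`,
and `ζ ^ i + ζ⁻¹ ^ i` is a polynomial in `ζ + ζ⁻¹`, so `K_n = ℚ(ζ + ζ⁻¹)`. The conjugation
`ζ ↦ ζ⁻¹` fixes `ζ + ζ⁻¹` but not `ζ`, so `K_n` has index two in the cyclotomic field `ℚ(ζ)`, whose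
degree is the totient of `3 * 2^n`, which is `2^n` for `n ≥ 1`.
-/

open IntermediateField Module

section AddInv

variable {F E : Type*} [Field F] [Field E] [Algebra F E] {x : E}

theorem finrank_adjoin_simple_eq_two_of_add_inv_eq {t : F} (ht : algebraMap F E t = x + x⁻¹)
    (hx : x ∉ (algebraMap F E).range) : finrank F F⟮x⟯ = 2 := by
  have hx₀ : x ≠ 0 := by rintro rfl; exact hx (zero_mem _)
  let q : F[X] := X ^ 2 - C t * X + 1
  have hq_monic : q.Monic := by simp only [q]; monicity!
  have hq_natDegree : q.natDegree = 2 := by simp only [q]; compute_degree!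
  have hq_root : aeval x q = 0 := by
    simp only [q, map_add, map_sub, map_mul, map_pow, aeval_X, aeval_C, map_one, ht]
    field_simp
    ring
  have hx_int : IsIntegral F x := ⟨q, hq_monic, hq_root⟩
  rw [adjoin.finrank hx_int]
  refine le_antisymm ?_ ((minpoly.two_le_natDegree_iff hx_int).2 hx)
  exact hq_natDegree ▸ natDegree_le_natDegree (minpoly.min F x hq_monic hq_root)

theorem adjoin_add_inv_le_adjoin : F⟮x + x⁻¹⟯ ≤ F⟮x⟯ := by
  have hx : x ∈ F⟮x⟯ := mem_adjoin_simple_self F x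
  exact adjoin_simple_le_iff.2 (add_mem hx (inv_mem hx))

theorem finrank_adjoin_add_inv_mul_two (hx : x ∉ F⟮x + x⁻¹⟯) :
    finrank F F⟮x + x⁻¹⟯ * 2 = finrank F F⟮x⟯ := by
  have h_top : F⟮x + x⁻¹⟯⟮x⟯.restrictScalars F = F⟮x⟯ := by
    rw [restrictScalars_adjoin_eq_sup]
    exact sup_eq_right.2 adjoin_add_inv_le_adjoin
  have h_two : finrank F⟮x + x⁻¹⟯ F⟮x + x⁻¹⟯⟮x⟯ = 2 :=
    finrank_adjoin_simple_eq_two_of_add_inv_eq (t := AdjoinSimple.gen F (x + x⁻¹))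
      (AdjoinSimple.algebraMap_gen F _) (by simpa using hx)
  rw [← h_two, finrank_mul_finrank, ← h_top]
  rfl

theorem notMem_adjoin_add_inv_of_isConjRoot_inv [Normal F E] (h_conj : IsConjRoot F x x⁻¹)
    (h_ne : x⁻¹ ≠ x) : x ∉ F⟮x + x⁻¹⟯ := by
  obtain ⟨σ, hσ⟩ := isConjRoot_iff_exists_algEquiv.1 h_conj.symm
  have hσ_add : σ (x + x⁻¹) = x + x⁻¹ := by rw [map_add, map_inv₀, hσ, inv_inv, add_comm]
  have hσ_fix : ∀ y ∈ F⟮x + x⁻¹⟯, σ y = y :=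
    (forall_mem_adjoin_smul_eq_self_iff F (S := {x + x⁻¹}) σ).2 (by simpa using hσ_add)
  exact fun hx ↦ h_ne (hσ.symm.trans (hσ_fix x hx))

theorem add_inv_pow_mem_adjoin_add_inv (hx : x ≠ 0) (i : ℕ) :
    x ^ i + (x ^ i)⁻¹ ∈ F⟮x + x⁻¹⟯ := by
  have h_dickson : aeval (x + x⁻¹) (dickson 1 (1 : F) i) = x ^ i + (x ^ i)⁻¹ := by
    rw [← inv_pow, ← dickson_one_one_eval_add_inv x x⁻¹ (mul_inv_cancel₀ hx), aeval_def,
      eval₂_eq_eval_map, map_dickson, map_one]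
  rw [← h_dickson, ← AdjoinSimple.coe_aeval_gen_apply]
  exact SetLike.coe_mem _

theorem exists_add_inv_eq [IsAlgClosed E] (y : E) : ∃ z ≠ 0, z + z⁻¹ = y := by
  have h_degree : (X ^ 2 - C y * X + 1).degree = 2 := by compute_degree!
  obtain ⟨z, hz⟩ := IsAlgClosed.exists_root (X ^ 2 - C y * X + 1) (by rw [h_degree]; decide)
  have hz_eq : z ^ 2 - y * z + 1 = 0 := by simpa [IsRoot] using hz
  have hz₀ : z ≠ 0 := by rintro rfl; simp at hz_eq
  refine ⟨z, hz₀, ?_⟩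
  field_simp
  linear_combination hz_eq

theorem add_inv_add_one_eq_zero_iff_isPrimitiveRoot_three [NeZero (3 : E)] (hx : x ≠ 0) :
    x + x⁻¹ + 1 = 0 ↔ IsPrimitiveRoot x 3 := by
  have : NeZero ((3 : ℕ) : E) := by simpa
  rw [← isRoot_cyclotomic_iff, cyclotomic_three, IsRoot.def]
  simp only [eval_add, eval_pow, eval_X, eval_one]
  have h_mul : x ^ 2 + x + 1 = x * (x + x⁻¹ + 1) := by field_simp; ring
  rw [h_mul, mul_eq_zero, or_iff_right hx]

end AddInv

section Cyclotomic

variable {F E : Type*} [Field F] [Field E] [Algebra F E] {ζ : E} {n : ℕ} [NeZero (n : F)]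

theorem isConjRoot_inv_of_isPrimitiveRoot (hζ : IsPrimitiveRoot ζ n)
    (h_irr : Irreducible (cyclotomic n F)) : IsConjRoot F ζ ζ⁻¹ :=
  (hζ.minpoly_eq_cyclotomic_of_irreducible h_irr).symm.trans
    (hζ.inv.minpoly_eq_cyclotomic_of_irreducible h_irr)

theorem finrank_adjoin_add_inv_mul_two_eq_totient [Normal F E]
    (hζ : IsPrimitiveRoot ζ n) (hn : 2 < n) (h_irr : Irreducible (cyclotomic n F)) :
    finrank F F⟮ζ + ζ⁻¹⟯ * 2 = n.totient := by
  have h_sq : ζ ^ 2 ≠ 1 := hζ.pow_ne_one_of_pos_of_lt two_ne_zero hn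
  have h_ne : ζ⁻¹ ≠ ζ := fun h ↦ h_sq (by
    rw [sq, mul_eq_one_iff_eq_inv₀ (hζ.ne_zero (by lia)), h])
  rw [finrank_adjoin_add_inv_mul_two (notMem_adjoin_add_inv_of_isConjRoot_inv
      (isConjRoot_inv_of_isPrimitiveRoot hζ h_irr) h_ne),
    adjoin.finrank (hζ.isIntegral (by lia)).tower_top,
    ← hζ.minpoly_eq_cyclotomic_of_irreducible h_irr, natDegree_cyclotomic]

end Cyclotomic

section Iterates

theorem aeval_add_inv_add_one_iterComp {E : Type*} [Field E] [Algebra ℚ E] {z : E} (hz : z ≠ 0)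
    (n : ℕ) : aeval (z + z⁻¹ + 1) (iterComp (X ^ 2 - C 2 * X) n)
      = z ^ 2 ^ n + (z ^ 2 ^ n)⁻¹ + 1 := by
  induction n with
  | zero => simp [iterComp]
  | succ n ih =>
    rw [iterComp, aeval_comp, ih, pow_succ 2 n, pow_mul]
    have hw : z ^ 2 ^ n ≠ 0 := pow_ne_zero _ hz
    simp only [map_sub, map_mul, map_pow, aeval_X, map_ofNat]
    field_simp
    ring

theorem natDegree_iterComp (p : ℚ[X]) (n : ℕ) : (iterComp p n).natDegree = p.natDegree ^ n := by
  induction n with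
  | zero => rw [iterComp, natDegree_X, pow_zero]
  | succ n ih => rw [iterComp, natDegree_comp, ih, pow_succ']

theorem iterComp_ne_zero {p : ℚ[X]} (hp : p.natDegree ≠ 0) (n : ℕ) : iterComp p n ≠ 0 :=
  ne_zero_of_natDegree_gt (n := 0) (natDegree_iterComp p n ▸ Nat.pow_pos (Nat.pos_of_ne_zero hp))

theorem add_inv_add_one_mem_rootSet_iterComp_iff {z : AlgebraicClosure ℚ} (hz : z ≠ 0) (n : ℕ) :
    z + z⁻¹ + 1 ∈ (iterComp (X ^ 2 - C 2 * X) n).rootSet (AlgebraicClosure ℚ) ↔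
      IsPrimitiveRoot (z ^ 2 ^ n) 3 := by
  have h_natDegree : (X ^ 2 - C 2 * X : ℚ[X]).natDegree = 2 := by compute_degree!
  rw [mem_rootSet_of_ne (iterComp_ne_zero (by lia) n), aeval_add_inv_add_one_iterComp hz,
    add_inv_add_one_eq_zero_iff_isPrimitiveRoot_three (pow_ne_zero _ hz)]

theorem splitFld_iterComp_eq_adjoin_add_inv {n : ℕ} {ζ : AlgebraicClosure ℚ}
    (hζ : IsPrimitiveRoot ζ (2 ^ n * 3)) :
    splitFld (iterComp (X ^ 2 - C 2 * X) n) = ℚ⟮ζ + ζ⁻¹⟯ := by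
  have hN : 0 < 2 ^ n * 3 := by positivity
  have : NeZero (2 ^ n * 3) := ⟨hN.ne'⟩
  have hζ₀ : ζ ≠ 0 := hζ.ne_zero hN.ne'
  apply le_antisymm
  · refine adjoin_le_iff.2 fun x hx ↦ ?_
    obtain ⟨z, hz₀, hz⟩ := exists_add_inv_eq (x - 1)
    obtain rfl : z + z⁻¹ + 1 = x := by rw [hz, sub_add_cancel]
    have h_cube := (add_inv_add_one_mem_rootSet_iterComp_iff hz₀ n).1 hx
    have hz_pow : z ^ (2 ^ n * 3) = 1 := by rw [pow_mul, h_cube.pow_eq_one]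
    obtain ⟨i, -, rfl⟩ := hζ.eq_pow_of_pow_eq_one hz_pow
    exact add_mem (add_inv_pow_mem_adjoin_add_inv hζ₀ i) (one_mem _)
  · have h_root := (add_inv_add_one_mem_rootSet_iterComp_iff hζ₀ n).2 (hζ.pow hN rfl)
    refine adjoin_simple_le_iff.2 ?_
    simpa [splitFld] using sub_mem (subset_adjoin ℚ _ h_root) (one_mem _)

end Iterates

/-- with `φ(X) = X² − 2X`, for every `n ≥ 1` the splitting field `K_n` of
`φ^{∘n}` over `ℚ` satisfies `[K_n : ℚ] = 2^(n−1)`. -/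
theorem stmt_6 (n : ℕ) (hn : 1 ≤ n) :
    Module.finrank ℚ ↥(splitFld (iterComp (X ^ 2 - C (2 : ℚ) * X) n)) = 2 ^ (n - 1) := by
  have hN : 2 < 2 ^ n * 3 := by have := Nat.one_le_two_pow (n := n); lia
  have : NeZero (2 ^ n * 3) := ⟨by lia⟩
  obtain ⟨ζ, hζ⟩ := HasEnoughRootsOfUnity.exists_primitiveRoot (AlgebraicClosure ℚ) (2 ^ n * 3)
  -- Not found by instance search: the `ℚ`-algebra structure here is `DivisionRing.toRatAlgebra`.
  have : IsAlgClosure ℚ (AlgebraicClosure ℚ) := ⟨inferInstance, AlgebraicClosure.isAlgebraic ℚ⟩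
  have h_finrank := finrank_adjoin_add_inv_mul_two_eq_totient (F := ℚ) hζ hN
    (cyclotomic.irreducible_rat (by lia))
  have h_totient : (2 ^ n * 3).totient = 2 ^ (n - 1) * 2 := by
    simp [Nat.totient_mul (Nat.Coprime.pow_left n (by decide : Nat.Coprime 2 3)),
      Nat.totient_prime_pow Nat.prime_two hn, Nat.totient_prime Nat.prime_three]
  rw [splitFld_iterComp_eq_adjoin_add_inv hζ]
  lia
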